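/- arXiv:2409.03428 — 2 statements merged into one kernel-verified Lean document; each statement's English description precedes it below -/
import Mathlib

section
/- (Shanks) The following identity holds: ∑_{p ≡ 3 (mod 4)} 2·log p/(p² − 1) = ∑_{k=1}^{∞} ( L′(2^k, χ₋₄)/L(2^k, χ₋₄) − ζ′(2^k)/ζ(2^k) − log 2/(2^{2^k} − 1) ), where the left-hand sum runs over primes p ≡ 3 (mod 4), and both series converge. -/
open Filter

/-- The Dirichlet `L`-function `L(s, χ₋₄) = ∑_{n ≥ 1} χ₋₄(n) n^{-s}` of the
nontrivial character modulo 4. -/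
noncomputable def L4 (s : ℝ) : ℝ :=
  ∑' n : ℕ, ((ZMod.χ₄ (n : ZMod 4) : ℤ) : ℝ) * (n : ℝ) ^ (-s)

/-- The Riemann zeta function `ζ(s) = ∑_{n ≥ 1} n^{-s}` (as a real function,
valid in the range of arguments `s = 2^k ≥ 2` used below). -/
noncomputable def zetaR (s : ℝ) : ℝ :=
  ∑' n : ℕ, ((n : ℝ) + 1) ^ (-s)

open Complex in
lemma aux_deriv (f : ℕ → ℂ) (F : ℝ → ℝ) (hf : LSeries.abscissaOfAbsConv f ≤ 1)
    (hF : ∀ s : ℝ, 1 < s → LSeries f s = (F s : ℂ)) (s : ℝ) (hs : 1 < s) :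
    deriv F s / F s = (deriv (LSeries f) s / LSeries f s).re := by
  have h1 : HasDerivAt (LSeries f) (deriv (LSeries f) s) (s : ℂ) := by
    have : LSeries.abscissaOfAbsConv f < ((s : ℂ).re : EReal) := by
      refine lt_of_le_of_lt hf ?_
      simpa using (by exact_mod_cast hs : ((1 : ℝ) : EReal) < (s : EReal))
    exact (LSeries_hasDerivAt this).differentiableAt.hasDerivAt
  have h2 := h1.real_of_complex
  have h3 : F =ᶠ[nhds s] (fun x : ℝ => (LSeries f x).re) := by
    filter_upwards [lt_mem_nhds hs] with x hx
    rw [hF x hx, ofReal_re]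
  rw [h3.deriv_eq, h2.deriv, hF s hs, div_ofReal_re]

lemma term_real (f : ℕ → ℂ) (g : ℕ → ℝ) (s : ℝ) (hs : s ≠ 0)
    (hg : ∀ n ≠ 0, f n = (g n : ℂ)) (n : ℕ) :
    LSeries.term f s n = ((g n * (n : ℝ) ^ (-s) : ℝ) : ℂ) := by
  rcases eq_or_ne n 0 with rfl | hn
  · simp [Real.zero_rpow (neg_ne_zero.mpr hs)]
  · rw [LSeries.term_of_ne_zero hn, hg n hn, Real.rpow_neg (Nat.cast_nonneg n)]
    push_cast
    rw [Complex.ofReal_cpow (Nat.cast_nonneg n)]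
    simp [div_eq_mul_inv]

lemma zeta_eq (s : ℝ) (hs : 1 < s) : LSeries 1 s = (zetaR s : ℂ) := by
  have h0 : s ≠ 0 := by linarith
  have hsum : Summable (fun n : ℕ => (n : ℝ) ^ (-s)) := Real.summable_nat_rpow.mpr (by linarith)
  have : LSeries 1 s = ((∑' n : ℕ, (n : ℝ) ^ (-s) : ℝ) : ℂ) := by
    rw [LSeries, Complex.ofReal_tsum]
    refine tsum_congr fun n => ?_
    rw [term_real 1 1 s h0 (by simp) n]; simp
  rw [this, hsum.tsum_eq_zero_add, zetaR]
  simp [Real.zero_rpow (neg_ne_zero.mpr h0)]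

noncomputable def chi : DirichletCharacter ℂ 4 := ZMod.χ₄.ringHomComp (Int.castRingHom ℂ)

lemma chi_apply (a : ZMod 4) : chi a = (((ZMod.χ₄ a : ℤ) : ℝ) : ℂ) := by
  simp [chi]

lemma L4_eq (s : ℝ) (hs : 1 < s) : LSeries (fun n => chi n) s = (L4 s : ℂ) := by
  rw [LSeries, L4, Complex.ofReal_tsum]
  refine tsum_congr fun n => ?_
  rw [term_real (fun n => chi n) (fun n => ((ZMod.χ₄ (n : ZMod 4) : ℤ) : ℝ)) s (by linarith)
    (fun n _ => chi_apply _) n]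

open ArithmeticFunction in
lemma hasSum_zeta (m : ℕ) (hm : 2 ≤ m) :
    HasSum (fun n : ℕ => vonMangoldt n / (n : ℝ) ^ m) (-(deriv zetaR m / zetaR m)) := by
  have hs : (1 : ℝ) < m := by exact_mod_cast hm
  have hs' : 1 < (((m : ℝ) : ℂ)).re := by simpa using hs
  rw [aux_deriv 1 zetaR LSeries.abscissaOfAbsConv_one.le zeta_eq m hs]
  have h := (LSeriesSummable_vonMangoldt hs').LSeriesHasSum
  rw [LSeries_vonMangoldt_eq hs'] at h
  have h2 := Complex.hasSum_re h
  rw [neg_div, Complex.neg_re] at h2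
  refine h2.congr_fun ?_ |> id
  intro n
  rw [term_real (fun n => (vonMangoldt n : ℂ)) (fun n => vonMangoldt n) m (by linarith)
    (fun n _ => rfl) n, Complex.ofReal_re, Real.rpow_neg (Nat.cast_nonneg n), Real.rpow_natCast]
  rfl

open ArithmeticFunction in
lemma hasSum_L4 (m : ℕ) (hm : 2 ≤ m) :
    HasSum (fun n : ℕ => ((ZMod.χ₄ (n : ZMod 4) : ℤ) : ℝ) * vonMangoldt n / (n : ℝ) ^ m)
      (-(deriv L4 m / L4 m)) := by
  have hs : (1 : ℝ) < m := by exact_mod_cast hm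
  have hs' : 1 < (((m : ℝ) : ℂ)).re := by simpa using hs
  rw [aux_deriv (fun n => chi n) L4
    (DirichletCharacter.absicssaOfAbsConv_eq_one (by norm_num) chi).le L4_eq m hs]
  have h := (DirichletCharacter.LSeriesSummable_twist_vonMangoldt chi hs').LSeriesHasSum
  rw [DirichletCharacter.LSeries_twist_vonMangoldt_eq chi hs'] at h
  have h2 := Complex.hasSum_re h
  rw [neg_div, Complex.neg_re] at h2
  refine h2.congr_fun ?_ |> id
  intro n
  rw [term_real _ (fun n => ((ZMod.χ₄ (n : ZMod 4) : ℤ) : ℝ) * vonMangoldt n) m (by linarith)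
    (fun n _ => by simp [chi_apply]) n, Complex.ofReal_re, Real.rpow_neg (Nat.cast_nonneg n),
    Real.rpow_natCast]
  rfl

/-- The contribution of a prime `p ≡ 3 (mod 4)` at exponent `m`. -/
noncomputable def A (m p : ℕ) : ℝ :=
  if Nat.Prime p ∧ p % 4 = 3 then
    2 * Real.log p * (1 / ((p : ℝ) ^ m - 1) - 1 / ((p : ℝ) ^ (m * 2) - 1)) else 0

lemma hasSum_transfer {f g : ℕ → ℝ} {a b : ℝ} (h : HasSum f a) (hf : ∀ n, g n = f n)
    (ha : b = a) : HasSum g b := by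
  have : g = f := funext hf
  rw [this, ha]; exact h

lemma geom_aux (y : ℝ) (hy : |y| < 1) : HasSum (fun j : ℕ => y ^ (j + 1)) (y / (1 - y)) := by
  have := (hasSum_geometric_of_abs_lt_one hy).mul_left y
  simpa [pow_succ', div_eq_mul_inv] using this

lemma prime_inner_sum (m p : ℕ) (hm : 2 ≤ m) (hp : p.Prime) :
    HasSum (fun j : ℕ => (1 - ((ZMod.χ₄ ((p ^ (j + 1) : ℕ) : ZMod 4) : ℤ) : ℝ)) *
      ArithmeticFunction.vonMangoldt (p ^ (j + 1)) / ((p ^ (j + 1) : ℕ) : ℝ) ^ m)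
      (A m p + if p = 2 then Real.log 2 / (2 ^ m - 1) else 0) := by
  have hp2 : (2 : ℝ) ≤ p := by exact_mod_cast hp.two_le
  have hpm : (1 : ℝ) < (p : ℝ) ^ m := one_lt_pow₀ (by linarith) (by omega)
  have hx1 : |((p : ℝ) ^ m)⁻¹| < 1 := by
    rw [abs_of_pos (by positivity)]; exact inv_lt_one_of_one_lt₀ hpm
  have hc : |((ZMod.χ₄ (p : ZMod 4) : ℤ) : ℝ)| ≤ 1 := by
    have : ∀ a : ZMod 4, |ZMod.χ₄ a| ≤ 1 := by decide
    exact_mod_cast this p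
  have hx2 : |((ZMod.χ₄ (p : ZMod 4) : ℤ) : ℝ) * ((p : ℝ) ^ m)⁻¹| < 1 := by
    rw [abs_mul]
    exact lt_of_le_of_lt (mul_le_of_le_one_left (abs_nonneg _) hc) hx1
  have h := ((geom_aux _ hx1).sub (geom_aux _ hx2)).mul_left (Real.log p)
  refine hasSum_transfer h (fun j => ?_) ?_
  · rw [ArithmeticFunction.vonMangoldt_apply_pow (by omega),
      ArithmeticFunction.vonMangoldt_apply_prime hp]
    push_cast
    rw [map_pow, mul_pow, inv_pow, ← pow_mul, ← pow_mul, mul_comm m]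
    push_cast
    ring
  · have h4 : p % 4 = 0 ∨ p % 4 = 1 ∨ p % 4 = 2 ∨ p % 4 = 3 := by omega
    have hcast : (p : ZMod 4) = ((p % 4 : ℕ) : ZMod 4) := by simp
    have hne : (p : ℝ) ^ m - 1 ≠ 0 := by linarith
    have hne' : (p : ℝ) ^ m ≠ 0 := by linarith
    have hne'' : (p : ℝ) ^ m + 1 ≠ 0 := by linarith
    unfold A
    have key : ((p : ℝ) ^ m)⁻¹ / (1 - ((p : ℝ) ^ m)⁻¹) = 1 / ((p : ℝ) ^ m - 1) := by
      field_simp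
    have hsq : (p : ℝ) ^ (m * 2) - 1 = ((p : ℝ) ^ m - 1) * ((p : ℝ) ^ m + 1) := by
      rw [pow_mul]; ring
    have hodd : p ≠ 2 → p % 2 = 1 := fun h => hp.eq_two_or_odd.resolve_left h
    by_cases h2 : p = 2
    · subst h2
      have : ZMod.χ₄ ((2 : ℕ) : ZMod 4) = 0 := by decide
      rw [this, key]; simp [div_eq_mul_inv]
    · have := hodd h2
      rcases (by omega : p % 4 = 1 ∨ p % 4 = 3) with h | h
      · have e : ZMod.χ₄ (p : ZMod 4) = 1 := by rw [hcast, h]; decide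
        rw [e]; simp [h, h2]
      · have e : ZMod.χ₄ (p : ZMod 4) = -1 := by rw [hcast, h]; decide
        rw [e, key, if_pos ⟨hp, h⟩, if_neg h2, hsq]
        have key2 : (((-1 : ℤ) : ℝ) * ((p : ℝ) ^ m)⁻¹) / (1 - ((-1 : ℤ) : ℝ) * ((p : ℝ) ^ m)⁻¹)
            = - (1 / ((p : ℝ) ^ m + 1)) := by
          push_cast
          have : 1 - -1 * ((p : ℝ) ^ m)⁻¹ = ((p : ℝ) ^ m + 1) / (p : ℝ) ^ m := by
            field_simp; ring
          rw [this]; field_simp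
        rw [key2]
        field_simp
        ring

lemma hasSum_A (m : ℕ) (hm : 2 ≤ m) :
    HasSum (A m) (deriv L4 m / L4 m - deriv zetaR m / zetaR m - Real.log 2 / (2 ^ m - 1)) := by
  have h := (hasSum_zeta m hm).sub (hasSum_L4 m hm)
  set V := deriv L4 m / L4 m - deriv zetaR m / zetaR m with hV
  set f : ℕ → ℝ := fun n => (1 - ((ZMod.χ₄ (n : ZMod 4) : ℤ) : ℝ)) *
      ArithmeticFunction.vonMangoldt n / (n : ℝ) ^ m with hf
  have h1 : HasSum f V := by
    refine hasSum_transfer h (fun n => ?_) ?_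
    · simp only [hf]; ring
    · rw [hV]; ring
  have hsupp : Function.support f ⊆ {n | IsPrimePow n} := by
    intro n hn
    by_contra hcon
    apply hn
    have : ArithmeticFunction.vonMangoldt n = 0 :=
      ArithmeticFunction.vonMangoldt_eq_zero_iff.mpr hcon
    simp [hf, this]
  have h2 : HasSum (f ∘ ((↑) : {n : ℕ // IsPrimePow n} → ℕ)) V :=
    (hasSum_subtype_iff_of_support_subset (s := {n | IsPrimePow n}) hsupp).mpr h1
  have h3 := (Nat.Primes.prodNatEquiv.hasSum_iff).mpr h2
  have h4 := h3.prod_fiberwise (g := fun p : Nat.Primes =>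
      A m p + if (p : ℕ) = 2 then Real.log 2 / (2 ^ m - 1) else 0)
    (fun p => prime_inner_sum m p hm p.2)
  have h5 : HasSum (fun p : ℕ => A m p + if p = 2 then Real.log 2 / (2 ^ m - 1) else 0) V := by
    refine (hasSum_subtype_iff_of_support_subset (s := {p | Nat.Prime p}) ?_).mp h4
    intro p hp
    by_contra hcon
    apply hp
    have : ¬ p.Prime := hcon
    have h2 : p ≠ 2 := by rintro rfl; exact this Nat.prime_two
    simp [A, this, h2]
  have h6 := h5.sub (hasSum_ite_eq 2 (Real.log 2 / ((2 : ℝ) ^ m - 1)))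
  simpa using h6

lemma A_nonneg (m p : ℕ) (hm : 2 ≤ m) : 0 ≤ A m p := by
  unfold A
  split_ifs with h
  · have hp2 : (1 : ℝ) < p := by exact_mod_cast h.1.one_lt
    have hpm : (1 : ℝ) < (p : ℝ) ^ m := one_lt_pow₀ hp2 (by omega)
    have : (p : ℝ) ^ m ≤ (p : ℝ) ^ (m * 2) := pow_le_pow_right₀ hp2.le (by omega)
    have h1 : 1 / ((p : ℝ) ^ (m * 2) - 1) ≤ 1 / ((p : ℝ) ^ m - 1) :=
      one_div_le_one_div_of_le (by linarith) (by linarith)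
    have := Real.log_pos hp2
    have := sub_nonneg.mpr h1
    positivity
  · exact le_rfl

/-- The left-hand summand. -/
noncomputable def B (p : ℕ) : ℝ :=
  if Nat.Prime p ∧ p % 4 = 3 then 2 * Real.log p / ((p : ℝ) ^ 2 - 1) else 0

lemma tele (p : ℕ) : HasSum (fun k : ℕ => A (2 ^ (k + 1)) p) (B p) := by
  have hnn : ∀ k, 0 ≤ A (2 ^ (k + 1)) p := fun k => A_nonneg _ _ (by
    calc 2 = 2 ^ 1 := rfl
      _ ≤ 2 ^ (k + 1) := Nat.pow_le_pow_right (by norm_num) (by omega))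
  rw [hasSum_iff_tendsto_nat_of_nonneg hnn]
  by_cases h : p.Prime ∧ p % 4 = 3
  · have hp2 : (1 : ℝ) < p := by exact_mod_cast h.1.one_lt
    simp only [A, B, if_pos h]
    set b : ℕ → ℝ := fun k => 1 / ((p : ℝ) ^ (2 ^ (k + 1)) - 1) with hb
    have e : ∀ n, ∑ k ∈ Finset.range n, 2 * Real.log p * (1 / ((p : ℝ) ^ (2 ^ (k + 1)) - 1) -
        1 / ((p : ℝ) ^ (2 ^ (k + 1) * 2) - 1)) = 2 * Real.log p * (b 0 - b n) := by
      intro n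
      rw [← Finset.mul_sum, ← Finset.sum_range_sub']
      rfl
    simp only [e]
    have hlim : Tendsto b atTop (nhds 0) := by
      have t1 : Tendsto (fun k : ℕ => 2 ^ (k + 1)) atTop (atTop : Filter ℕ) :=
        (tendsto_pow_atTop_atTop_of_one_lt (by norm_num)).comp (tendsto_add_atTop_nat 1)
      have t2 := (tendsto_pow_atTop_atTop_of_one_lt hp2).comp t1
      have t3 := tendsto_atTop_add_const_right _ (-1 : ℝ) t2
      have := t3.inv_tendsto_atTop
      refine this.congr fun k => ?_
      simp [hb, sub_eq_add_neg]
    have := (tendsto_const_nhds (x := b 0)).sub hlim |>.const_mul (2 * Real.log p)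
    convert this using 2
    simp [hb, div_eq_mul_inv]
  · simp [A, B, h]

lemma summable_B : Summable B := by
  have hs : Summable (fun p : ℕ => 16 * (p : ℝ) ^ (-(3/2) : ℝ)) :=
    (Real.summable_nat_rpow.mpr (by norm_num)).mul_left _
  refine Summable.of_nonneg_of_le (fun p => (tele p).nonneg fun k => A_nonneg _ _ ?_) (fun p => ?_) hs
  · calc 2 = 2 ^ 1 := rfl
      _ ≤ 2 ^ (k + 1) := Nat.pow_le_pow_right (by norm_num) (by omega)
  · unfold B
    split_ifs with h
    · have hp2 : (2 : ℝ) ≤ p := by exact_mod_cast h.1.two_le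
      have hp0 : (0 : ℝ) < p := by linarith
      have hl := Real.log_le_rpow_div hp0.le (by norm_num : (0 : ℝ) < 1 / 2)
      have e : (p : ℝ) ^ (-(3/2) : ℝ) = (p : ℝ) ^ (1 / 2 : ℝ) / (p : ℝ) ^ 2 := by
        rw [← Real.rpow_natCast, ← Real.rpow_sub hp0]; norm_num
      rw [e, ← mul_div_assoc, div_le_div_iff₀ (by nlinarith) (by positivity)]
      have hr : 0 < (p : ℝ) ^ (1 / 2 : ℝ) := by positivity
      have h1 : (p : ℝ) ^ 2 ≤ 2 * ((p : ℝ) ^ 2 - 1) := by nlinarith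
      have h2 : 2 * Real.log p ≤ 4 * (p : ℝ) ^ (1 / 2 : ℝ) := by linarith
      calc 2 * Real.log p * (p : ℝ) ^ 2 ≤ (4 * (p : ℝ) ^ (1 / 2 : ℝ)) * (p : ℝ) ^ 2 := by gcongr
        _ ≤ (4 * (p : ℝ) ^ (1 / 2 : ℝ)) * (2 * ((p : ℝ) ^ 2 - 1)) := by gcongr
        _ ≤ _ := by nlinarith
    · positivity

lemma two_le_pow (k : ℕ) : 2 ≤ 2 ^ (k + 1) := by
  have : 1 ≤ 2 ^ k := Nat.one_le_two_pow
  rw [pow_succ]; omega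

lemma A_prod_nonneg : (0 : ℕ × ℕ → ℝ) ≤ fun x : ℕ × ℕ => A (2 ^ (x.2 + 1)) x.1 := by
  intro x
  exact A_nonneg _ _ (two_le_pow x.2)

lemma A_prod_summable : Summable (fun x : ℕ × ℕ => A (2 ^ (x.2 + 1)) x.1) := by
  refine (summable_prod_of_nonneg A_prod_nonneg).mpr ⟨fun p => (tele p).summable, ?_⟩
  have e : (fun p : ℕ => ∑' k : ℕ, A (2 ^ (k + 1)) p) = B := funext fun p => (tele p).tsum_eq
  exact e ▸ summable_B

lemma swap_aux (F : ℕ → ℕ → ℝ) (S R : ℕ → ℝ) (hF : Summable (fun x : ℕ × ℕ => F x.2 x.1))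
    (hS : ∀ p, HasSum (fun k => F k p) (S p)) (hR : ∀ k, HasSum (fun p => F k p) (R k)) :
    Summable S ∧ Summable R ∧ ∑' p, S p = ∑' k, R k := by
  have h1 := hF.hasSum
  have hB := h1.prod_fiberwise hS
  have hswap := (Equiv.prodComm ℕ ℕ).hasSum_iff.mpr h1
  have hR' := hswap.prod_fiberwise hR
  exact ⟨hB.summable, hR'.summable, hB.tsum_eq.trans hR'.tsum_eq.symm⟩

lemma shanks_aux (R : ℕ → ℝ) (hk : ∀ k : ℕ, HasSum (fun p => A (2 ^ (k + 1)) p) (R k)) :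
    Summable B ∧ Summable R ∧ ∑' p, B p = ∑' k, R k :=
  swap_aux (fun k p => A (2 ^ (k + 1)) p) B R A_prod_summable tele hk

lemma shanks_term (k : ℕ) : HasSum (fun p => A (2 ^ (k + 1)) p)
      (deriv L4 (2 ^ (k + 1)) / L4 (2 ^ (k + 1)) -
        deriv zetaR (2 ^ (k + 1)) / zetaR (2 ^ (k + 1)) -
        Real.log 2 / (2 ^ (2 ^ (k + 1)) - 1)) := by
  have h2 : 2 ≤ 2 ^ (k + 1) := by
    calc 2 = 2 ^ 1 := rfl
      _ ≤ 2 ^ (k + 1) := Nat.pow_le_pow_right (by norm_num) (by omega)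
  have h := hasSum_A (2 ^ (k + 1)) h2
  rw [Nat.cast_pow, Nat.cast_ofNat] at h
  exact h

/-- Shanks' identity:
`∑_{p ≡ 3 (4)} 2 log p/(p²-1)
 = ∑_{k ≥ 1} (L′(2^k,χ₋₄)/L(2^k,χ₋₄) - ζ′(2^k)/ζ(2^k) - log 2/(2^{2^k}-1))`,
with both series converging. -/
theorem shanks_identity :
    Summable (fun p : ℕ => if Nat.Prime p ∧ p % 4 = 3 then
      2 * Real.log p / ((p : ℝ) ^ 2 - 1) else 0) ∧
    Summable (fun k : ℕ =>
      deriv L4 (2 ^ (k + 1)) / L4 (2 ^ (k + 1)) -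
        deriv zetaR (2 ^ (k + 1)) / zetaR (2 ^ (k + 1)) -
        Real.log 2 / (2 ^ (2 ^ (k + 1)) - 1)) ∧
    (∑' p : ℕ, if Nat.Prime p ∧ p % 4 = 3 then
      2 * Real.log p / ((p : ℝ) ^ 2 - 1) else 0) =
    ∑' k : ℕ,
      (deriv L4 (2 ^ (k + 1)) / L4 (2 ^ (k + 1)) -
        deriv zetaR (2 ^ (k + 1)) / zetaR (2 ^ (k + 1)) -
        Real.log 2 / (2 ^ (2 ^ (k + 1)) - 1)) := by
  exact shanks_aux _ shanks_term
end

section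
/- (Ramanujan; proved by Bhargava–Berndt) Let μ be the positive real number defined by (π/2)·μ/√2 = ∫₀¹ dx/√(1−x⁴). Suppose 0 < θ ≤ π/2 and 0 < v ≤ 1 satisfy θ·μ/√2 = ∫₀^v dx/√(1−x⁴). Then μ²/(2v²) = csc²θ − 1/π − 8·∑_{n=1}^{∞} n·cos(2nθ)/(e^{2πn} − 1). -/
open Real

namespace RL
open Complex Filter Topology

noncomputable def row (z : ℂ) : ℂ := ∑' n : ℤ, 1 / (z + n) ^ 2

lemma row_summable (z : ℂ) : Summable (fun n : ℤ => 1 / (z + n) ^ 2) := by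
  have := EisensteinSeries.linear_right_summable z 1 (k := 2) (by norm_num)
  refine this.congr fun n => ?_
  simp

lemma row_neg (z : ℂ) : row (-z) = row z := by
  unfold row
  rw [← (Equiv.neg ℤ).tsum_eq]
  refine tsum_congr fun n => ?_
  congr 1
  simp only [Equiv.neg_apply]; push_cast; ring

lemma row_eq_q (z : ℂ) (hz : 0 < z.im) :
    row z = -4 * π ^ 2 * ∑' n : ℕ, n * cexp (2 * π * I * z) ^ n := by
  have := EisensteinSeries.qExpansion_identity (k := 1) le_rfl ⟨z, hz⟩
  simp only [Nat.factorial, pow_one] at this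
  unfold row
  refine Eq.trans this ?_
  congr 1
  push_cast
  have : I ^ 2 = -1 := I_sq
  norm_num
  ring_nf; rw [this]; ring

lemma norm_q_lt (z : ℂ) (hz : 0 < z.im) : ‖cexp (2 * π * I * z)‖ < 1 := 
  UpperHalfPlane.norm_exp_two_pi_I_lt_one ⟨z, hz⟩

lemma row_eq_sin (z : ℂ) (hz : 0 < z.im) :
    row z = π ^ 2 / Complex.sin (π * z) ^ 2 := by
  rw [row_eq_q z hz, tsum_coe_mul_geometric_of_norm_lt_one (norm_q_lt z hz)]
  have h1 : 1 - cexp (2 * π * I * z) ≠ 0 := by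
    intro h
    have h2 : cexp (2 * π * I * z) = 1 := by linear_combination -h
    have := norm_q_lt z hz
    rw [h2] at this
    simp at this
  have hE : cexp (π * z * I) ≠ 0 := Complex.exp_ne_zero _
  have h2 : cexp (2 * π * I * z) = cexp (π * z * I) ^ 2 := by
    rw [← Complex.exp_nat_mul]; congr 1; push_cast; ring
  have h3 : Complex.sin (π * z) = (cexp (π * z * I) - (cexp (π * z * I))⁻¹) * (-I) / 2 := by
    rw [Complex.sin, neg_mul, Complex.exp_neg]; ring
  rw [h3, h2]
  rw [h2] at h1
  set E := cexp (π * z * I)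
  have h4 : (E - E⁻¹) * (-I) / 2 = (1 - E ^ 2) * I / (2 * E) := by
    field_simp; ring
  rw [h4]
  have : I ^ 2 = -1 := I_sq
  rw [div_pow, mul_pow, this]
  field_simp
  ring

lemma row_eq_sin_real (x : ℝ) (hx : Real.sin (π * x) ≠ 0) :
    row x = π ^ 2 / Complex.sin (π * x) ^ 2 := by
  have hx' : Complex.sin (π * x) ≠ 0 := by
    rw [← Complex.ofReal_mul, ← Complex.ofReal_sin]; exact_mod_cast hx
  have hxn : ∀ n : ℤ, x + n ≠ 0 := by
    intro n h
    apply hx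
    have : x = ((-n : ℤ) : ℝ) := by push_cast; linarith
    rw [this, mul_comm]
    exact Real.sin_int_mul_pi _
  have hT : Tendsto (fun t : ℝ => (x : ℂ) + t * I) (𝓝[>] 0) (𝓝 x) := by
    have : Continuous (fun t : ℝ => (x : ℂ) + t * I) := by fun_prop
    have := this.tendsto 0
    simp only [ofReal_zero, zero_mul, add_zero] at this
    exact this.mono_left nhdsWithin_le_nhds
  have h1 : Tendsto (fun t : ℝ => row ((x : ℂ) + t * I)) (𝓝[>] 0) (𝓝 (row x)) := by
    unfold row
    refine tendsto_tsum_of_dominated_convergence (bound := fun n : ℤ => ‖1 / ((x : ℂ) + n) ^ 2‖)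
      (row_summable x).norm ?_ ?_
    · intro n
      have : (x : ℂ) + n ≠ 0 := by exact_mod_cast hxn n
      exact tendsto_const_nhds.div ((hT.add tendsto_const_nhds).pow 2) (pow_ne_zero _ this)
    · refine Eventually.of_forall fun t n => ?_
      have hpos : 0 < ‖(x : ℂ) + n‖ := norm_pos_iff.mpr (by exact_mod_cast hxn n)
      have hle : ‖(x : ℂ) + n‖ ≤ ‖(x : ℂ) + t * I + n‖ := by
        have h : (x : ℂ) + n = ((x + n : ℝ) : ℂ) := by push_cast; rfl
        rw [h, Complex.norm_real, Real.norm_eq_abs]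
        have := Complex.abs_re_le_norm ((x : ℂ) + t * I + n)
        simpa using this
      rw [norm_div, norm_div, norm_pow, norm_pow]
      gcongr
  have h2 : Tendsto (fun t : ℝ => row ((x : ℂ) + t * I)) (𝓝[>] 0)
      (𝓝 (π ^ 2 / Complex.sin (π * x) ^ 2)) := by
    have : Tendsto (fun t : ℝ => (π : ℂ) ^ 2 / Complex.sin (π * ((x : ℂ) + t * I)) ^ 2) (𝓝[>] 0)
      (𝓝 (π ^ 2 / Complex.sin (π * x) ^ 2)) := by
      refine tendsto_const_nhds.div (Tendsto.pow ?_ 2) (pow_ne_zero _ hx')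
      exact (Complex.continuous_sin.tendsto _).comp (hT.const_mul _)
    refine this.congr' ?_
    filter_upwards [self_mem_nhdsWithin] with t ht
    rw [row_eq_sin]
    simpa using ht
  exact tendsto_nhds_unique h1 h2

/-- Sum of the upper rows. -/
lemma hasSum_upper (x : ℝ) :
    HasSum (fun m : ℕ => row ((x : ℂ) + (m + 1) * I))
      (-4 * π ^ 2 * ∑' k : ℕ, (k : ℂ) * cexp (2 * π * I * x) ^ k / (cexp (2 * π) ^ k - 1)) ∧
    Summable (fun k : ℕ => (k : ℂ) * cexp (2 * π * I * x) ^ k / (cexp (2 * π) ^ k - 1)) := by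
  set r : ℝ := Real.exp (-(2 * π)) with hr
  have hr0 : 0 < r := Real.exp_pos _
  have hr1 : r < 1 := by rw [hr, Real.exp_lt_one_iff]; linarith [Real.pi_pos]
  set w : ℂ := cexp (2 * π * I * x) with hw
  have hwn : ‖w‖ = 1 := by
    rw [hw, show (2 * π * I * x : ℂ) = ((2 * π * x : ℝ) : ℂ) * I by push_cast; ring]
    exact Complex.norm_exp_ofReal_mul_I _
  let f : ℕ × ℕ → ℂ := fun p => (p.2 : ℂ) * w ^ p.2 * (r : ℂ) ^ (p.2 * (p.1 + 1))
  have hnf : ∀ p, ‖f p‖ ≤ r ^ p.1 * ((p.2 : ℝ) * r ^ p.2) := by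
    rintro ⟨m, k⟩
    simp only [f, norm_mul, norm_pow, hwn, one_pow, mul_one, Complex.norm_natCast,
      Complex.norm_real, Real.norm_eq_abs, abs_of_pos hr0]
    rcases Nat.eq_zero_or_pos k with rfl | hk
    · simp
    · have : r ^ (k * (m + 1)) ≤ r ^ (m + k) := by
        apply pow_le_pow_of_le_one hr0.le hr1.le
        nlinarith
      calc (k : ℝ) * r ^ (k * (m + 1)) ≤ k * r ^ (m + k) := by gcongr
        _ = _ := by rw [pow_add]; ring
  have hsg : Summable (fun m : ℕ => r ^ m) := summable_geometric_of_lt_one hr0.le hr1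
  have hsk : Summable (fun k : ℕ => (k : ℝ) * r ^ k) := by
    have := summable_pow_mul_geometric_of_norm_lt_one 1 (r := r) (by rwa [Real.norm_eq_abs, abs_of_pos hr0])
    simpa using this
  have hsf : Summable f := by
    refine Summable.of_norm_bounded (g := fun p : ℕ × ℕ => r ^ p.1 * ((p.2 : ℝ) * r ^ p.2)) ?_ hnf
    exact hsg.mul_of_nonneg hsk (fun m => by positivity) (fun m => by positivity)
  have hrow : ∀ m : ℕ, -4 * π ^ 2 * ∑' k, f (m, k) = row ((x : ℂ) + (m + 1) * I) := by
    intro m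
    rw [row_eq_q _ (by simp; positivity)]
    congr 1
    refine tsum_congr fun k => ?_
    have : cexp (2 * π * I * ((x : ℂ) + (m + 1) * I)) = w * (r : ℂ) ^ (m + 1) := by
      rw [hw, hr, ofReal_exp, ← Complex.exp_nat_mul, ← Complex.exp_add]
      congr 1
      push_cast
      linear_combination (2 * π * (m + 1)) * I_sq
    rw [this, mul_pow, ← pow_mul, mul_comm (m + 1) k]
    simp only [f]; ring
  have hcol : ∀ k : ℕ, HasSum (fun m => f (m, k)) ((k : ℂ) * w ^ k / (cexp (2 * π) ^ k - 1)) := by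
    intro k
    rcases Nat.eq_zero_or_pos k with rfl | hk
    · simp [f, hasSum_zero]
    · have hq : ‖(r : ℂ) ^ k‖ < 1 := by
        rw [norm_pow, Complex.norm_real, Real.norm_eq_abs, abs_of_pos hr0]
        exact pow_lt_one₀ hr0.le hr1 hk.ne'
      have := (hasSum_geometric_of_norm_lt_one hq).mul_left ((k : ℂ) * w ^ k * (r : ℂ) ^ k)
      have g1 : (fun m => f (m, k)) = fun i : ℕ => (k : ℂ) * w ^ k * (r : ℂ) ^ k * ((r : ℂ) ^ k) ^ i := by
        ext m
        simp only [f]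
        rw [← pow_mul, mul_add, pow_add]
        ring
      have g2 : (k : ℂ) * w ^ k / (cexp (2 * π) ^ k - 1) =
          (k : ℂ) * w ^ k * (r : ℂ) ^ k * (1 - (r : ℂ) ^ k)⁻¹ := by
        have hrc : cexp (2 * π) = (r : ℂ)⁻¹ := by
          rw [hr, ofReal_exp, ← Complex.exp_neg]; congr 1; push_cast; ring
        have hne : (1 : ℂ) - (r : ℂ) ^ k ≠ 0 := by
          intro h
          have : (r : ℂ) ^ k = 1 := by linear_combination -h
          rw [this] at hq; simp at hq
        have hrk : (r : ℂ) ^ k ≠ 0 := by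
          apply pow_ne_zero; exact_mod_cast hr0.ne'
        rw [hrc, inv_pow]
        have : ((r : ℂ) ^ k)⁻¹ - 1 = (1 - (r : ℂ) ^ k) / (r : ℂ) ^ k := by field_simp
        rw [this]
        field_simp
      rw [g1, g2]
      exact this
  have hswap : Summable (fun p : ℕ × ℕ => f p.swap) := hsf.prod_symm
  have hS : Summable (fun k : ℕ => (k : ℂ) * w ^ k / (cexp (2 * π) ^ k - 1)) := by
    have := (hswap.hasSum.prod_fiberwise (fun k => hcol k))
    exact this.summable
  refine ⟨?_, hS⟩
  have e1 := hsf.hasSum.prod_fiberwise (fun m => (hsf.prod_factor m).hasSum)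
  have e2 := (hswap.hasSum.prod_fiberwise (fun k => hcol k)).tsum_eq
  have e3 : ∑' p : ℕ × ℕ, f p.swap = ∑' p, f p := (Equiv.prodComm ℕ ℕ).tsum_eq f
  rw [e2, e3]
  have := e1.mul_left (-4 * (π : ℂ) ^ 2)
  simpa only [hrow] using this

lemma indep_one_I : LinearIndependent ℝ ![(1 : ℂ), I] := by
  rw [LinearIndependent.pair_iff]
  intro s t h
  have h1 := congrArg Complex.re h
  have h2 := congrArg Complex.im h
  simp at h1 h2
  exact ⟨h1, h2⟩

noncomputable def L : PeriodPair := ⟨1, I, indep_one_I⟩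

lemma G2_I : EisensteinSeries.G2 UpperHalfPlane.I = π := by
  have h := EisensteinSeries.G2_S_transform UpperHalfPlane.I
  have hS : ModularGroup.S • UpperHalfPlane.I = UpperHalfPlane.I := by
    rw [UpperHalfPlane.modular_S_smul]
    ext
    simp
  rw [hS] at h
  simp only [UpperHalfPlane.coe_I, I_sq] at h
  have hI : (-2 * π * I / I : ℂ) = -2 * π := by field_simp
  rw [hI] at h
  linear_combination (1/2 : ℂ) * (h + (by norm_num : ((-1 : ℂ)⁻¹ * EisensteinSeries.G2 UpperHalfPlane.I - -2 * π) = - EisensteinSeries.G2 UpperHalfPlane.I + 2 * π))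

lemma e2_hasSum (m : ℤ) : HasSum (fun n : ℤ => 1 / ((m : ℂ) * I + n) ^ 2)
    (EisensteinSeries.e2Summand m UpperHalfPlane.I) := by
  have := (EisensteinSeries.e2Summand_summable m UpperHalfPlane.I).hasSum
  refine this.congr_fun fun n => ?_
  simp [EisensteinSeries.eisSummand]

/-- The `℘` function as a sum over rows. -/
lemma hasSum_wp (z : ℂ) : HasSum (fun m : ℤ => row (z + m * I) -
    EisensteinSeries.e2Summand m UpperHalfPlane.I) (L.weierstrassP z) := by
  have h := L.hasSum_weierstrassP z
  let e : ℤ × ℤ ≃ L.lattice :=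
    ((Equiv.prodComm ℤ ℤ).trans L.latticeEquivProd.symm.toEquiv).trans (Equiv.neg _)
  have he : ∀ p : ℤ × ℤ, ((e p : L.lattice) : ℂ) = -(p.1 * I + p.2) := by
    rintro ⟨m, n⟩
    have := L.latticeEquiv_symm_apply (n, m)
    simp only [e, Equiv.trans_apply, Equiv.prodComm_apply, Prod.swap_prod_mk, Equiv.neg_apply,
      LinearEquiv.coe_toEquiv]
    rw [NegMemClass.coe_neg]
    refine congrArg Neg.neg (Eq.trans this ?_)
    simp [L]; ring
  have h2 := e.hasSum_iff.mpr h
  refine h2.prod_fiberwise fun m => ?_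
  have h3 := (row_summable (z + m * I)).hasSum.sub (e2_hasSum m)
  refine Eq.mp ?_ h3
  congr 1
  ext n
  simp only [Function.comp, he]
  congr 2
  · ring
  · ring

noncomputable def lam (x : ℝ) (k : ℕ) : ℂ :=
  (k : ℂ) * cexp (2 * π * I * x) ^ k / (cexp (2 * π) ^ k - 1)

noncomputable def cs (x : ℝ) (k : ℕ) : ℝ :=
  (k : ℝ) * Real.cos (2 * k * (π * x)) / (Real.exp (2 * π * k) - 1)

lemma lam_add (x : ℝ) (k : ℕ) : lam x k + lam (-x) k = 2 * ((cs x k : ℝ) : ℂ) := by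
  unfold lam cs
  push_cast
  rw [← Complex.exp_nat_mul, ← Complex.exp_nat_mul, ← Complex.exp_nat_mul, Complex.cos]
  rw [show (k : ℂ) * (2 * π) = 2 * π * k by ring,
    show (k : ℂ) * (2 * π * I * x) = 2 * k * (π * x) * I by ring,
    show (k : ℂ) * (2 * π * I * -x) = -(2 * k * (π * x)) * I by ring]
  ring

lemma lam_upper (x : ℝ) : HasSum (fun m : ℕ => row ((x : ℂ) + ((m : ℂ) + 1) * I))
    (-4 * π ^ 2 * ∑' k : ℕ, lam x k) ∧ Summable (lam x) := hasSum_upper x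

lemma cs_hasSum (x : ℝ) : HasSum (fun k => 2 * ((cs x k : ℝ) : ℂ))
    (∑' k, lam x k + ∑' k, lam (-x) k) := by
  have hs := (lam_upper x).2.hasSum.add (lam_upper (-x)).2.hasSum
  simpa only [lam_add] using hs

lemma cs_summable (x : ℝ) : Summable (cs x) := by
  have := (cs_hasSum x).summable.mul_left (1/2 : ℂ)
  rw [← Complex.summable_ofReal]
  refine this.congr fun k => ?_
  ring

lemma cs_tsum (x : ℝ) : ∑' k, lam x k + ∑' k, lam (-x) k = 2 * ((∑' k, cs x k : ℝ) : ℂ) := by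
  rw [← (cs_hasSum x).tsum_eq, tsum_mul_left, Complex.ofReal_tsum]

lemma up (x : ℝ) : HasSum (fun m : ℕ => row ((x : ℂ) + ((m : ℤ) : ℂ) * I))
    (row x + (-4 * π ^ 2 * ∑' k : ℕ, lam x k)) := by
  have h := (lam_upper x).1
  generalize (-4 * π ^ 2 * ∑' k : ℕ, lam x k : ℂ) = A at h ⊢
  have h2 := (hasSum_nat_add_iff (f := fun m : ℕ => row ((x : ℂ) + ((m : ℤ) : ℂ) * I))
      (g := A) 1).mp (h.congr_fun fun m => by push_cast; rfl)
  rw [Finset.sum_range_one] at h2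
  rw [add_comm]
  simpa only [Nat.cast_zero, Int.cast_zero, zero_mul, add_zero] using h2

lemma down (x : ℝ) : HasSum (fun m : ℕ => row ((x : ℂ) + ((-((m : ℤ) + 1) : ℤ) : ℂ) * I))
      (-4 * π ^ 2 * ∑' k : ℕ, lam (-x) k) := by
  have h := (lam_upper (-x)).1
  refine h.congr_fun fun m => ?_
  rw [← row_neg]
  congr 1
  push_cast
  ring

lemma tsum_cos' (x : ℝ) : HasSum (fun m : ℤ => row ((x : ℂ) + m * I)) (row x - 8 * π ^ 2 *
   ((∑' k : ℕ, cs x k : ℝ) : ℂ)) := by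
  have h := HasSum.of_nat_of_neg_add_one (f := fun m : ℤ => row ((x : ℂ) + m * I)) (up x) (down x)
  have e : row x - 8 * π ^ 2 * ((∑' k : ℕ, cs x k : ℝ) : ℂ) =
     row x + (-4 * π ^ 2 * ∑' k : ℕ, lam x k) + (-4 * π ^ 2 * ∑' k : ℕ, lam (-x) k) := by
    linear_combination (4 * (π : ℂ) ^ 2) * cs_tsum x
  rw [e]
  exact h

lemma tsum_cos (x : ℝ) : HasSum (fun m : ℤ => row ((x : ℂ) + m * I)) (row x - 8 * π ^ 2 *
   ((∑' k : ℕ, (k : ℝ) * Real.cos (2 * k * (π * x)) / (Real.exp (2 * π * k) - 1) : ℝ) : ℂ)) ∧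
   Summable (fun k : ℕ => (k : ℝ) * Real.cos (2 * k * (π * x)) / (Real.exp (2 * π * k) - 1)) :=
  ⟨tsum_cos' x, cs_summable x⟩

/-- Right-hand side of the theorem. -/
noncomputable def P (θ : ℝ) : ℝ := (Real.sin θ)⁻¹ ^ 2 - 1 / π -
        8 * ∑' n : ℕ, ((n : ℝ) + 1) * Real.cos (2 * ((n : ℝ) + 1) * θ) /
          (Real.exp (2 * π * ((n : ℝ) + 1)) - 1)

lemma P_summable (θ : ℝ) : Summable (fun n : ℕ => ((n : ℝ) + 1) * Real.cos (2 * ((n : ℝ) + 1) * θ) /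
          (Real.exp (2 * π * ((n : ℝ) + 1)) - 1)) := by
  have := (summable_nat_add_iff 1).mpr (tsum_cos (θ / π)).2
  refine this.congr fun n => ?_
  rw [mul_div_cancel₀ _ Real.pi_ne_zero]
  push_cast
  rfl

lemma wp_eq_P (θ : ℝ) (h : Real.sin θ ≠ 0) : L.weierstrassP ((θ / π : ℝ) : ℂ) = ((π ^ 2 * P θ : ℝ) : ℂ) := by
  have h1 := (tsum_cos (θ / π)).1
  have h2 := hasSum_wp ((θ / π : ℝ) : ℂ)
  have h3 := h1.sub h2
  simp only [sub_sub_cancel] at h3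
  have h4 : EisensteinSeries.G2 UpperHalfPlane.I = ∑' m : ℤ, EisensteinSeries.e2Summand m UpperHalfPlane.I := by
    rw [EisensteinSeries.G2]
    exact tsum_eq_of_summable_unconditional h3.summable
  rw [h3.tsum_eq, G2_I, row_eq_sin_real _ (by rwa [mul_div_cancel₀ _ Real.pi_ne_zero])] at h4
  have h5 : (π : ℂ) * ((θ / π : ℝ) : ℂ) = θ := by
    rw [← ofReal_mul, mul_div_cancel₀ _ Real.pi_ne_zero]
  have h6 : ∑' k : ℕ, (k : ℝ) * Real.cos (2 * k * (π * (θ / π))) / (Real.exp (2 * π * k) - 1) =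
     ∑' n : ℕ, ((n : ℝ) + 1) * Real.cos (2 * ((n : ℝ) + 1) * θ) /
          (Real.exp (2 * π * ((n : ℝ) + 1)) - 1) := by
    rw [(tsum_cos (θ / π)).2.tsum_eq_zero_add]
    simp only [mul_div_cancel₀ _ Real.pi_ne_zero]
    simp
  rw [h6, h5] at h4
  unfold P
  set S := ∑' n : ℕ, ((n : ℝ) + 1) * Real.cos (2 * ((n : ℝ) + 1) * θ) /
          (Real.exp (2 * π * ((n : ℝ) + 1)) - 1)
  have hpi : (π : ℂ) ≠ 0 := by exact_mod_cast Real.pi_ne_zero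
  push_cast
  have : (π : ℂ) ^ 2 * ((Complex.sin θ)⁻¹ ^ 2 - 1 / π - 8 * S) = 
    π ^ 2 / Complex.sin θ ^ 2 - 8 * π ^ 2 * S - π := by
    field_simp
    ring
  rw [this]
  simp only [ofReal_div] at h4
  linear_combination h4

lemma mul_I_mem {l : ℂ} (h : l ∈ L.lattice) : l * I ∈ L.lattice := by
  rw [PeriodPair.mem_lattice] at h ⊢
  obtain ⟨m, n, rfl⟩ := h
  refine ⟨-n, m, ?_⟩
  simp only [L]
  push_cast
  linear_combination -(n : ℂ) * I_sq

lemma G6 : L.G 6 = 0 := by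
  let e : L.lattice ≃ L.lattice :=
    { toFun := fun l => ⟨l * I, mul_I_mem l.2⟩
      invFun := fun l => ⟨-(l * I), neg_mem (mul_I_mem l.2)⟩
      left_inv := fun l => by
        ext; simp [mul_assoc]
      right_inv := fun l => by
        ext; simp [mul_assoc] }
  have h : L.G 6 = - L.G 6 := by
    unfold PeriodPair.G
    rw [← tsum_neg, ← e.tsum_eq]
    refine tsum_congr fun l => ?_
    have : I ^ 6 = -1 := by rw [show 6 = 2 * 3 by norm_num, pow_mul, I_sq]; norm_num
    simp only [e, Equiv.coe_fn_mk, mul_pow, this]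
    rw [mul_neg_one, inv_neg]
  linear_combination (1/2 : ℂ) * h

lemma not_mem (θ : ℝ) (h : Real.sin θ ≠ 0) : ((θ / π : ℝ) : ℂ) ∉ L.lattice := by
  rw [PeriodPair.mem_lattice]
  rintro ⟨m, n, hmn⟩
  apply h
  have h1 := congrArg Complex.re hmn
  simp [L] at h1
  have : θ = m * π := by rw [h1, div_mul_cancel₀ _ Real.pi_ne_zero]
  rw [this]
  exact Real.sin_int_mul_pi m

lemma dwp_half : L.derivWeierstrassP ((1/2 : ℝ) : ℂ) = 0 := by
  have h1 := L.derivWeierstrassP_neg ((1/2 : ℝ) : ℂ)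
  have h2 := L.derivWeierstrassP_add_coe (-((1/2 : ℝ) : ℂ)) ⟨L.ω₁, L.ω₁_mem_lattice⟩
  have h3 : -((1/2 : ℝ) : ℂ) + L.ω₁ = ((1/2 : ℝ) : ℂ) := by simp [L]; norm_num
  simp only [h3] at h2
  linear_combination (1/2 : ℂ) * (h2 + h1)

lemma P_deriv (θ : ℝ) (h : Real.sin θ ≠ 0) :
    ∃ d : ℝ, HasDerivAt P d θ ∧ L.derivWeierstrassP ((θ / π : ℝ) : ℂ) = ((π ^ 3 * d : ℝ) : ℂ) := by
  have hd : HasDerivAt L.weierstrassP (L.derivWeierstrassP ((θ / π : ℝ) : ℂ)) ((θ / π : ℝ) : ℂ) := by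
    rw [← L.deriv_weierstrassP]
    exact ((L.differentiableOn_weierstrassP).differentiableAt
      (L.isClosed_lattice.isOpen_compl.mem_nhds (not_mem θ h))).hasDerivAt
  have hc : HasDerivAt (fun t : ℝ => L.weierstrassP ((t / π : ℝ) : ℂ))
      (L.derivWeierstrassP ((θ / π : ℝ) : ℂ) * ((1 / π : ℝ) : ℂ)) θ := by
    have h1 : HasDerivAt (fun t : ℝ => t / π) (1 / π) θ := (hasDerivAt_id θ).div_const π
    have := HasDerivAt.comp θ hd h1.ofReal_comp
    exact this
  have hev : ∀ᶠ t in 𝓝 θ, L.weierstrassP ((t / π : ℝ) : ℂ) = ((π ^ 2 * P t : ℝ) : ℂ) := by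
    filter_upwards [Real.continuous_sin.continuousAt.eventually_ne h] with t ht
    exact wp_eq_P t ht
  have hc2 := hc.congr_of_eventuallyEq (hev.mono fun t ht => ht.symm)
  have hre : HasDerivAt (fun t : ℝ => π ^ 2 * P t)
      ((L.derivWeierstrassP ((θ / π : ℝ) : ℂ) * ((1 / π : ℝ) : ℂ)).re) θ := by
    have := (Complex.reCLM.hasFDerivAt.comp_hasDerivAt θ hc2)
    simpa only [Function.comp_def, Complex.reCLM_apply, Complex.ofReal_re] using this
  have hu := hre.ofReal_comp.unique hc2
  have hpi := Real.pi_ne_zero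
  have hpi' : (π : ℂ) ≠ 0 := by exact_mod_cast Real.pi_ne_zero
  generalize L.derivWeierstrassP ((θ / π : ℝ) : ℂ) = D at *
  refine ⟨(D * ((1 / π : ℝ) : ℂ)).re / π ^ 2, ?_, ?_⟩
  · have := hre.div_const (π ^ 2)
    refine this.congr_of_eventuallyEq (Eventually.of_forall fun t => ?_)
    field_simp
  · rw [show π ^ 3 * ((D * ((1 / π : ℝ) : ℂ)).re / π ^ 2) = π * (D * ((1 / π : ℝ) : ℂ)).re by
      field_simp, ofReal_mul, hu]
    push_cast
    field_simp

lemma P_ode (he : P (π / 2) ≠ 0) (θ : ℝ) (h : Real.sin θ ≠ 0) :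
    ∃ d : ℝ, HasDerivAt P d θ ∧ d ^ 2 = 4 * P θ * (P θ ^ 2 - P (π / 2) ^ 2) := by
  obtain ⟨d, hd, hd2⟩ := P_deriv θ h
  refine ⟨d, hd, ?_⟩
  have hs : Real.sin (π / 2) ≠ 0 := by simp
  have e1 := L.derivWeierstrassP_sq _ (not_mem θ h)
  have e2 := L.derivWeierstrassP_sq _ (not_mem _ hs)
  have e3 : (π / 2) / π = 1 / 2 := by have := Real.pi_ne_zero; field_simp
  have e4 := wp_eq_P _ hs
  rw [e3] at e2 e4
  have g3 : L.g₃ = 0 := by simp [PeriodPair.g₃, G6]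
  rw [dwp_half, e4, g3] at e2
  rw [hd2, wp_eq_P θ h, g3] at e1
  have hpi' : (π : ℂ) ≠ 0 := by exact_mod_cast Real.pi_ne_zero
  have he' : (P (π / 2) : ℂ) ≠ 0 := by exact_mod_cast he
  have hg : L.g₂ = 4 * π ^ 4 * P (π / 2) ^ 2 := by
    push_cast at e2
    have : ((π : ℂ) ^ 2 * P (π / 2)) * (L.g₂ - 4 * π ^ 4 * P (π / 2) ^ 2) = 0 := by
      push_cast
      linear_combination e2
    rcases mul_eq_zero.mp this with h | h
    · exact absurd h (mul_ne_zero (pow_ne_zero _ hpi') he')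
    · linear_combination h
  rw [hg] at e1
  have e5 : (π ^ 3 * d) ^ 2 = 4 * (π ^ 2 * P θ) ^ 3 - 4 * π ^ 4 * P (π / 2) ^ 2 * (π ^ 2 * P θ) := by
    rw [sub_zero] at e1
    exact_mod_cast e1
  have hp6 : π ^ 6 ≠ 0 := pow_ne_zero _ Real.pi_ne_zero
  apply mul_left_cancel₀ hp6
  linear_combination e5

lemma abs_sin_nat_mul (n : ℕ) (x : ℝ) : |Real.sin (n * x)| ≤ n * |Real.sin x| := by
  induction n with
  | zero => simp
  | succ k ih =>
    push_cast
    rw [add_mul, one_mul, Real.sin_add]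
    calc _ ≤ |Real.sin (k * x) * Real.cos x| + |Real.cos (k * x) * Real.sin x| := abs_add_le _ _
      _ = |Real.sin (k * x)| * |Real.cos x| + |Real.cos (k * x)| * |Real.sin x| := by
        rw [abs_mul, abs_mul]
      _ ≤ (k * |Real.sin x|) * 1 + 1 * |Real.sin x| := by
        gcongr
        · exact Real.abs_cos_le_one _
        · exact Real.abs_cos_le_one _
      _ = _ := by ring

noncomputable def cf (n : ℕ) : ℝ := ((n : ℝ) + 1) ^ 3 / (Real.exp (2 * π * ((n : ℝ) + 1)) - 1)

lemma exp_big (n : ℕ) : (300 : ℝ) ^ (n + 1) ≤ Real.exp (2 * π * ((n : ℝ) + 1)) := by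
  have h1 : (300 : ℝ) ≤ Real.exp (2 * π) := by
    have h2 : Real.exp 6 ≤ Real.exp (2 * π) := by
      apply Real.exp_le_exp.mpr; linarith [Real.pi_gt_three]
    have h3 : Real.exp 6 = Real.exp 1 ^ 6 := by rw [← Real.exp_nat_mul]; norm_num
    have h4 : (2.7 : ℝ) ^ 6 ≤ Real.exp 1 ^ 6 := by
      gcongr; linarith [Real.exp_one_gt_d9]
    have : (300 : ℝ) ≤ 2.7 ^ 6 := by norm_num
    linarith
  have : Real.exp (2 * π * ((n : ℝ) + 1)) = Real.exp (2 * π) ^ (n + 1) := by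
    rw [← Real.exp_nat_mul]; congr 1; push_cast; ring
  rw [this]
  gcongr

lemma den_pos (n : ℕ) : 0 < Real.exp (2 * π * ((n : ℝ) + 1)) - 1 := by
  have := exp_big n
  have : (1 : ℝ) < 300 ^ (n + 1) := one_lt_pow₀ (by norm_num) (by omega)
  linarith

lemma cube_le (n : ℕ) : ((n : ℝ) + 1) ^ 3 ≤ 4 ^ (n + 1) := by
  have : (n + 1) ^ 3 ≤ 4 ^ (n + 1) := by
    induction n with
    | zero => norm_num
    | succ k ih =>
      rcases Nat.eq_zero_or_pos k with rfl | hk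
      · norm_num
      · rw [pow_succ 4]
        have : (k + 1 + 1) ^ 3 ≤ (k + 1) ^ 3 * 4 := by
          obtain ⟨j, rfl⟩ := Nat.exists_eq_add_of_le hk
          ring_nf; nlinarith [sq_nonneg (j : ℤ)]
        omega
  exact_mod_cast this

lemma cf_le (n : ℕ) : cf n ≤ (2 * (4 / 300)) * (4 / 300 : ℝ) ^ n := by
  have h1 := exp_big n
  have h2 : (2 : ℝ) ≤ 300 ^ (n + 1) := by
    calc (2 : ℝ) ≤ 300 ^ 1 := by norm_num
      _ ≤ _ := pow_le_pow_right₀ (by norm_num) (by omega)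
  unfold cf
  calc _ ≤ (4 : ℝ) ^ (n + 1) / (300 ^ (n + 1) / 2) := by
        have := cube_le n
        gcongr
        linarith
    _ = _ := by rw [pow_succ, pow_succ, div_pow]; field_simp

lemma cf_nonneg (n : ℕ) : 0 ≤ cf n := div_nonneg (by positivity) (den_pos n).le

lemma cf_summable : Summable cf :=
  Summable.of_nonneg_of_le cf_nonneg cf_le
    ((summable_geometric_of_lt_one (by norm_num) (by norm_num)).mul_left _)

lemma cf_tsum : ∑' n, cf n < 1 / 16 := by
  have h := cf_summable.tsum_le_tsum cf_le
    ((summable_geometric_of_lt_one (by norm_num) (by norm_num)).mul_left _)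
  rw [tsum_mul_left, tsum_geometric_of_lt_one (by norm_num) (by norm_num)] at h
  norm_num at h
  norm_num
  linarith

lemma P_ge (θ : ℝ) : (Real.sin θ)⁻¹ ^ 2 - 1 / 3 - 1 / 2 < P θ := by
  unfold P
  have h1 : ∑' n : ℕ, ((n : ℝ) + 1) * Real.cos (2 * ((n : ℝ) + 1) * θ) /
          (Real.exp (2 * π * ((n : ℝ) + 1)) - 1) ≤ ∑' n, cf n := by
    refine (P_summable θ).tsum_le_tsum (fun n => ?_) cf_summable
    unfold cf
    have := den_pos n
    gcongr
    have : (1 : ℝ) ≤ (n : ℝ) + 1 := by have : (0 : ℝ) ≤ n := n.cast_nonneg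
                                       linarith
    calc ((n : ℝ) + 1) * Real.cos (2 * ((n : ℝ) + 1) * θ) ≤ ((n : ℝ) + 1) * 1 := by
          gcongr; exact Real.cos_le_one _
      _ ≤ ((n : ℝ) + 1) ^ 3 := by nlinarith [sq_nonneg (n : ℝ)]
  have h2 : 1 / π < 1 / 3 := by
    apply one_div_lt_one_div_of_lt (by norm_num) Real.pi_gt_three
  linarith [cf_tsum]

lemma e_pos : 0 < P (π / 2) := by
  have := P_ge (π / 2)
  simp at this
  linarith

lemma P_anti (a b : ℝ) (ha : 0 < a) (hab : a < b) (hb : b ≤ π / 2) : P b < P a := by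
  have hpi := Real.pi_pos
  have hsa : 0 < Real.sin a := Real.sin_pos_of_pos_of_lt_pi ha (by linarith)
  have hsb : 0 < Real.sin b := Real.sin_pos_of_pos_of_lt_pi (by linarith) (by linarith)
  set X := Real.sin (a + b) * Real.sin (b - a) with hX
  have hXpos : 0 < X := mul_pos (Real.sin_pos_of_pos_of_lt_pi (by linarith) (by linarith))
    (Real.sin_pos_of_pos_of_lt_pi (by linarith) (by linarith))
  have h1 : X ≤ (Real.sin a)⁻¹ ^ 2 - (Real.sin b)⁻¹ ^ 2 := by
    have : X = Real.sin b ^ 2 - Real.sin a ^ 2 := by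
      rw [hX, Real.sin_add, Real.sin_sub]
      nlinarith [Real.sin_sq_add_cos_sq a, Real.sin_sq_add_cos_sq b]
    have h2 : (Real.sin a)⁻¹ ^ 2 - (Real.sin b)⁻¹ ^ 2 = X / (Real.sin a ^ 2 * Real.sin b ^ 2) := by
      rw [this]; field_simp
    rw [h2, le_div_iff₀ (by positivity)]
    have : Real.sin a ^ 2 * Real.sin b ^ 2 ≤ 1 := by
      have := Real.sin_sq_le_one a
      have := Real.sin_sq_le_one b
      nlinarith [sq_nonneg (Real.sin a), sq_nonneg (Real.sin b)]
    nlinarith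
  have h3 : ∑' n : ℕ, ((n : ℝ) + 1) * Real.cos (2 * ((n : ℝ) + 1) * a) /
          (Real.exp (2 * π * ((n : ℝ) + 1)) - 1) - ∑' n : ℕ, ((n : ℝ) + 1) * Real.cos (2 * ((n : ℝ) + 1) * b) /
          (Real.exp (2 * π * ((n : ℝ) + 1)) - 1) ≤ (2 * X) * ∑' n, cf n := by
    rw [← (P_summable a).tsum_sub (P_summable b), ← tsum_mul_left]
    refine ((P_summable a).sub (P_summable b)).tsum_le_tsum (fun n => ?_) (cf_summable.mul_left _)
    have hd := den_pos n
    unfold cf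
    rw [← sub_div, ← mul_div_assoc]
    gcongr
    rw [← mul_sub, Real.cos_sub_cos]
    have g1 := abs_sin_nat_mul (n + 1) (a + b)
    have g2 := abs_sin_nat_mul (n + 1) (b - a)
    push_cast at g1 g2
    have e1 : (2 * ((n : ℝ) + 1) * a + 2 * ((n : ℝ) + 1) * b) / 2 = ((n : ℝ) + 1) * (a + b) := by ring
    have e2 : (2 * ((n : ℝ) + 1) * a - 2 * ((n : ℝ) + 1) * b) / 2 = -(((n : ℝ) + 1) * (b - a)) := by ring
    rw [e1, e2, Real.sin_neg]
    rw [abs_of_pos (Real.sin_pos_of_pos_of_lt_pi (by linarith : 0 < a + b) (by linarith))] at g1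
    rw [abs_of_pos (Real.sin_pos_of_pos_of_lt_pi (by linarith : 0 < b - a) (by linarith))] at g2
    have g3 : Real.sin (((n : ℝ) + 1) * (a + b)) * Real.sin (((n : ℝ) + 1) * (b - a)) ≤
       (((n : ℝ) + 1) * Real.sin (a + b)) * (((n : ℝ) + 1) * Real.sin (b - a)) := by
      refine (le_abs_self _).trans ?_
      rw [abs_mul]
      gcongr
      exact (abs_nonneg _).trans g1
    have hn : (0 : ℝ) ≤ (n : ℝ) + 1 := by positivity
    have g4 := mul_le_mul_of_nonneg_left g3 hn
    rw [hX]
    linarith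
  unfold P
  have := cf_tsum
  nlinarith

lemma d_neg (θ : ℝ) (h0 : 0 < θ) (h1 : θ < π / 2) :
    ∃ d : ℝ, HasDerivAt P d θ ∧ d < 0 ∧ d ^ 2 = 4 * P θ * (P θ ^ 2 - P (π / 2) ^ 2) := by
  have hs : Real.sin θ ≠ 0 := (Real.sin_pos_of_pos_of_lt_pi h0 (by linarith [Real.pi_pos])).ne'
  obtain ⟨d, hd, hd2⟩ := P_ode e_pos.ne' θ hs
  refine ⟨d, hd, ?_, hd2⟩
  have hP := P_anti θ (π / 2) h0 h1 le_rfl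
  have he := e_pos
  have hd0 : d ≠ 0 := by
    rintro rfl
    have : 0 < 4 * P θ * (P θ ^ 2 - P (π / 2) ^ 2) := by
      apply mul_pos (by linarith)
      nlinarith
    rw [← hd2] at this
    simp at this
  refine lt_of_le_of_ne ?_ hd0
  have hanti : AntitoneOn P (Set.Ioo 0 (π / 2)) := by
    intro a ha b hb hab
    rcases hab.eq_or_lt with rfl | hab
    · exact le_rfl
    · exact (P_anti a b ha.1 hab hb.2.le).le
  have hm : Set.Ioo 0 (π / 2) ∈ 𝓝 θ := Ioo_mem_nhds h0 h1
  have := hanti.derivWithin_nonpos (x := θ)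
  rw [derivWithin_of_mem_nhds hm, hd.deriv] at this
  exact this

noncomputable def Lam (v : ℝ) : ℝ := ∫ x in (0 : ℝ)..v, 1 / Real.sqrt (1 - x ^ 4)

noncomputable def V (θ : ℝ) : ℝ := if θ = 0 then 0 else Real.sqrt (P (π / 2) / P θ)

lemma P_ge_e {θ : ℝ} (h0 : 0 < θ) (h1 : θ ≤ π / 2) : P (π / 2) ≤ P θ := by
  rcases h1.eq_or_lt with rfl | h1
  · exact le_rfl
  · exact (P_anti _ _ h0 h1 le_rfl).le

lemma V_eq {θ : ℝ} (h0 : 0 < θ) : V θ = Real.sqrt (P (π / 2) / P θ) := by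
  simp [V, h0.ne']

lemma V_sq {θ : ℝ} (h0 : 0 < θ) (h1 : θ ≤ π / 2) : V θ ^ 2 = P (π / 2) / P θ := by
  rw [V_eq h0, Real.sq_sqrt]
  have := P_ge_e h0 h1
  have := e_pos
  exact div_nonneg this.le (by linarith)

lemma V_pos {θ : ℝ} (h0 : 0 < θ) (h1 : θ ≤ π / 2) : 0 < V θ := by
  rw [V_eq h0, Real.sqrt_pos]
  have := P_ge_e h0 h1
  have := e_pos
  exact div_pos this (by linarith)

lemma V_le {θ : ℝ} (h0 : 0 < θ) (h1 : θ ≤ π / 2) : V θ ≤ 1 := by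
  rw [V_eq h0, Real.sqrt_le_left zero_le_one, one_pow]
  have := P_ge_e h0 h1
  have := e_pos
  rw [div_le_one (by linarith)]
  linarith

lemma V_lt {θ : ℝ} (h0 : 0 < θ) (h1 : θ < π / 2) : V θ < 1 := by
  rw [V_eq h0, Real.sqrt_lt' one_pos]
  have := P_anti _ _ h0 h1 le_rfl
  have := e_pos
  rw [one_pow, div_lt_one (by linarith)]
  linarith

lemma V_zero : V 0 = 0 := by simp [V]

lemma V_contAt {θ : ℝ} (h0 : 0 < θ) (h1 : θ ≤ π / 2) : ContinuousAt V θ := by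
  have hs : Real.sin θ ≠ 0 := (Real.sin_pos_of_pos_of_lt_pi h0 (by linarith [Real.pi_pos])).ne'
  obtain ⟨d, hd, -⟩ := P_deriv θ hs
  have hP : P θ ≠ 0 := by have := P_ge_e h0 h1; have := e_pos; linarith
  have : ContinuousAt (fun t => Real.sqrt (P (π / 2) / P t)) θ :=
    (continuousAt_const.div hd.continuousAt hP).sqrt
  refine this.congr ?_
  filter_upwards [lt_mem_nhds h0] with t ht
  exact (V_eq ht).symm

lemma V_sq_le {θ : ℝ} (h0 : 0 < θ) (h1 : θ ≤ π / 2) :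
    V θ ^ 2 ≤ 6 * P (π / 2) * Real.sin θ ^ 2 := by
  have hs : 0 < Real.sin θ := Real.sin_pos_of_pos_of_lt_pi h0 (by linarith [Real.pi_pos])
  have he := e_pos
  have hP := P_ge_e h0 h1
  have hg := P_ge θ
  rw [V_sq h0 h1, div_le_iff₀ (by linarith)]
  have h2 : 1 < Real.sin θ ^ 2 * P θ + 5 / 6 * Real.sin θ ^ 2 := by
    have h3 : Real.sin θ ^ 2 * ((Real.sin θ)⁻¹ ^ 2 - 1 / 3 - 1 / 2) < Real.sin θ ^ 2 * P θ :=
      mul_lt_mul_of_pos_left hg (by positivity)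
    have h4 : Real.sin θ ^ 2 * (Real.sin θ)⁻¹ ^ 2 = 1 := by field_simp
    linarith
  have h5 : Real.sin θ ^ 2 ≤ 1 := Real.sin_sq_le_one θ
  nlinarith

lemma V_cont : ContinuousOn V (Set.Icc 0 (π / 2)) := by
  intro θ hθ
  rcases hθ.1.eq_or_lt with rfl | h0
  · rw [ContinuousWithinAt, V_zero]
    have hb : Tendsto (fun t => Real.sqrt (6 * P (π / 2) * Real.sin t ^ 2))
        (𝓝[Set.Icc 0 (π / 2)] 0) (𝓝 0) := by
      have : Continuous (fun t => Real.sqrt (6 * P (π / 2) * Real.sin t ^ 2)) := by fun_prop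
      have h := this.tendsto 0
      simp only [Real.sin_zero] at h
      norm_num at h
      exact h.mono_left nhdsWithin_le_nhds
    refine tendsto_of_tendsto_of_tendsto_of_le_of_le' tendsto_const_nhds hb ?_ ?_
    · filter_upwards with t
      unfold V
      split_ifs
      · exact le_rfl
      · exact Real.sqrt_nonneg _
    · filter_upwards [self_mem_nhdsWithin] with t ht
      rcases ht.1.eq_or_lt with rfl | h
      · rw [V_zero]; exact Real.sqrt_nonneg _
      · exact Real.le_sqrt_of_sq_le (V_sq_le h ht.2)
  · exact (V_contAt h0 hθ.2).continuousWithinAt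


lemma Lam_cont (hI : IntervalIntegrable (fun x : ℝ => 1 / Real.sqrt (1 - x ^ 4))
    MeasureTheory.volume 0 1) : ContinuousOn Lam (Set.Icc 0 1) := by
  have := intervalIntegral.continuousOn_primitive_interval' hI (a := 0) (by simp)
  rwa [Set.uIcc_of_le zero_le_one] at this

lemma Lam_deriv (hI : IntervalIntegrable (fun x : ℝ => 1 / Real.sqrt (1 - x ^ 4))
    MeasureTheory.volume 0 1) {v : ℝ} (h0 : 0 < v) (h1 : v < 1) :
    HasDerivAt Lam (1 / Real.sqrt (1 - v ^ 4)) v := by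
  have hv4 : v ^ 4 < 1 := pow_lt_one₀ h0.le h1 (by norm_num)
  apply intervalIntegral.integral_hasDerivAt_right
  · refine hI.mono_set ?_
    rw [Set.uIcc_of_le h0.le, Set.uIcc_of_le zero_le_one]
    exact Set.Icc_subset_Icc_right h1.le
  · refine Measurable.stronglyMeasurable ?_ |>.stronglyMeasurableAtFilter
    fun_prop
  · refine continuousAt_const.div (by fun_prop) ?_
    exact (Real.sqrt_pos.mpr (by linarith)).ne'

lemma Lam_strict (hI : IntervalIntegrable (fun x : ℝ => 1 / Real.sqrt (1 - x ^ 4))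
    MeasureTheory.volume 0 1) : StrictMonoOn Lam (Set.Icc 0 1) := by
  refine strictMonoOn_of_deriv_pos (convex_Icc 0 1) (Lam_cont hI) fun v hv => ?_
  rw [interior_Icc] at hv
  rw [(Lam_deriv hI hv.1 hv.2).deriv]
  have hv4 : v ^ 4 < 1 := pow_lt_one₀ hv.1.le hv.2 (by norm_num)
  have := Real.sqrt_pos.mpr (show 0 < 1 - v ^ 4 by linarith)
  positivity

lemma comp_deriv (hI : IntervalIntegrable (fun x : ℝ => 1 / Real.sqrt (1 - x ^ 4))
    MeasureTheory.volume 0 1) {θ : ℝ} (h0 : 0 < θ) (h1 : θ < π / 2) :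
    HasDerivAt (fun t => Lam (V t)) (Real.sqrt (P (π / 2))) θ := by
  obtain ⟨d, hd, hdn, hd2⟩ := d_neg θ h0 h1
  have he := e_pos
  have hP := P_anti _ _ h0 h1 le_rfl
  have hV0 := V_pos h0 h1.le
  have hV1 := V_lt h0 h1
  have hVs := V_sq h0 h1.le
  have hVe := V_eq h0
  have hv4 : V θ ^ 4 < 1 := pow_lt_one₀ hV0.le hV1 (by norm_num)
  have hsp := Real.sqrt_pos.mpr (show 0 < 1 - V θ ^ 4 by linarith)
  have hss := Real.sq_sqrt (show 0 ≤ 1 - V θ ^ 4 by linarith)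
  have hPp : 0 < P θ := by linarith
  have hVd : HasDerivAt V (((0 * P θ - P (π / 2) * d) / P θ ^ 2) / (2 * V θ)) θ := by
    have h := ((hasDerivAt_const θ (P (π / 2))).div hd hPp.ne').sqrt (div_pos he hPp).ne'
    rw [hVe]
    refine h.congr_of_eventuallyEq ?_
    filter_upwards [lt_mem_nhds h0] with t ht
    exact V_eq ht
  have hc := (Lam_deriv hI hV0 hV1).comp θ hVd
  have key : 1 / Real.sqrt (1 - V θ ^ 4) * (((0 * P θ - P (π / 2) * d) / P θ ^ 2) / (2 * V θ))
      = Real.sqrt (P (π / 2)) := by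
    symm
    rw [Real.sqrt_eq_iff_mul_self_eq_of_pos]
    · have hv4' : V θ ^ 4 = (P (π / 2) / P θ) ^ 2 := by rw [← hVs]; ring
      rw [← sq, mul_pow, div_pow, div_pow, div_pow, mul_pow, hss, hv4', hVs, zero_mul, zero_sub,
        neg_sq, mul_pow, hd2]
      have : P θ ^ 2 - P (π / 2) ^ 2 ≠ 0 := by
        have : 0 < P θ ^ 2 - P (π / 2) ^ 2 := by nlinarith
        exact this.ne'
      have h2 : 1 - (P (π / 2) / P θ) ^ 2 = (P θ ^ 2 - P (π / 2) ^ 2) / P θ ^ 2 := by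
        field_simp
      rw [h2]
      field_simp
      try ring
    · have : 0 < 0 * P θ - P (π / 2) * d := by nlinarith
      positivity
  rw [key] at hc
  exact hc

lemma Lam_V (hI : IntervalIntegrable (fun x : ℝ => 1 / Real.sqrt (1 - x ^ 4))
    MeasureTheory.volume 0 1) {θ : ℝ} (h0 : 0 < θ) (h1 : θ ≤ π / 2) :
    Lam (V θ) = Real.sqrt (P (π / 2)) * θ := by
  have hmaps : Set.MapsTo V (Set.Icc 0 θ) (Set.Icc 0 1) := by
    intro t ht
    rcases ht.1.eq_or_lt with rfl | h
    · rw [V_zero]; simp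
    · exact ⟨(V_pos h (ht.2.trans h1)).le, V_le h (ht.2.trans h1)⟩
  have hc : ContinuousOn (fun t => Lam (V t)) (Set.Icc 0 θ) :=
    (Lam_cont hI).comp (V_cont.mono (Set.Icc_subset_Icc_right h1)) hmaps
  obtain ⟨c, hc, h⟩ := exists_hasDerivAt_eq_slope (fun t => Lam (V t))
    (fun _ => Real.sqrt (P (π / 2))) h0 hc
    (fun t ht => comp_deriv hI ht.1 (ht.2.trans_le h1))
  have hL0 : Lam (V 0) = 0 := by rw [V_zero]; simp [Lam]
  rw [hL0, sub_zero, sub_zero] at h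
  rw [h, div_mul_cancel₀ _ h0.ne']

lemma main (μ θ v : ℝ)
    (hμpos : 0 < μ)
    (hμ : (π / 2) * μ / Real.sqrt 2 = Lam 1)
    (hθ0 : 0 < θ) (hθ : θ ≤ π / 2) (hv0 : 0 < v) (hv : v ≤ 1)
    (hrel : θ * μ / Real.sqrt 2 = Lam v) :
    μ ^ 2 / (2 * v ^ 2) = P θ := by
  have hpi := Real.pi_pos
  have h2 : 0 < Real.sqrt 2 := by positivity
  have hI : IntervalIntegrable (fun x : ℝ => 1 / Real.sqrt (1 - x ^ 4))
    MeasureTheory.volume 0 1 := by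
    by_contra hn
    have : Lam 1 = 0 := intervalIntegral.integral_undef hn
    rw [this] at hμ
    have : 0 < π / 2 * μ / Real.sqrt 2 := by positivity
    linarith
  have he := e_pos
  have hPp : 0 < P θ := he.trans_le (P_ge_e hθ0 hθ)
  have hV1 : V (π / 2) = 1 := by
    rw [V_eq (by positivity), div_self he.ne', Real.sqrt_one]
  have hA := Lam_V hI (θ := π / 2) (by positivity) le_rfl
  rw [hV1, ← hμ] at hA
  have hm : μ = Real.sqrt (P (π / 2)) * Real.sqrt 2 := by
    have h3 : π / 2 * μ = π / 2 * (Real.sqrt (P (π / 2)) * Real.sqrt 2) := by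
      rw [div_eq_iff h2.ne'] at hA
      linarith
    exact mul_left_cancel₀ (by positivity) h3
  have hB := Lam_V hI hθ0 hθ
  have hC : Lam v = Lam (V θ) := by
    rw [← hrel, hB, hm]
    field_simp
  have hvV : v = V θ := (Lam_strict hI).injOn ⟨hv0.le, hv⟩ ⟨(V_pos hθ0 hθ).le, V_le hθ0 hθ⟩ hC
  rw [hvV, V_sq hθ0 hθ, hm, mul_pow, Real.sq_sqrt he.le, Real.sq_sqrt (by norm_num)]
  field_simp

end RL

/-- Ramanujan's inversion formula for the lemniscate integral (proved by
Bhargava–Berndt): if `θμ/√2 = ∫₀ᵛ dx/√(1-x⁴)` with `0 < θ ≤ π/2`,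
`0 < v ≤ 1`, and `μ` is determined by `θ = π/2`, `v = 1`, then
`μ²/(2v²) = csc²θ - 1/π - 8 ∑_{n ≥ 1} n cos(2nθ)/(e^{2πn} - 1)`. -/
theorem ramanujan_lemniscate_inversion (μ θ v : ℝ)
    (hμpos : 0 < μ)
    (hμ : (π / 2) * μ / Real.sqrt 2 = ∫ x in (0 : ℝ)..1, 1 / Real.sqrt (1 - x ^ 4))
    (hθ0 : 0 < θ) (hθ : θ ≤ π / 2) (hv0 : 0 < v) (hv : v ≤ 1)
    (hrel : θ * μ / Real.sqrt 2 = ∫ x in (0 : ℝ)..v, 1 / Real.sqrt (1 - x ^ 4)) :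
    μ ^ 2 / (2 * v ^ 2) =
      (Real.sin θ)⁻¹ ^ 2 - 1 / π -
        8 * ∑' n : ℕ, ((n : ℝ) + 1) * Real.cos (2 * ((n : ℝ) + 1) * θ) /
          (Real.exp (2 * π * ((n : ℝ) + 1)) - 1) := by
  exact RL.main μ θ v hμpos hμ hθ0 hθ hv0 hv hrel
end
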